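/- Let H be a non-empty graph containing no pendant edges, and let n be an integer with n > f(H) + δ'(H). Then rwsat(n, H) ≤ δ'(H)·(n − f(H) − δ'(H)) + C(f(H)+δ'(H), 2). Moreover, this bound is witnessed by the rainbow edge-colored graph on vertex set A ∪ B ∪ C with |A| = δ'(H), |B| = f(H), |C| = n − f(H) − δ'(H), whose edges are all pairs within A ∪ B together with all pairs between A and C; this graph is weakly H-rainbow saturated. -/

import Mathlib

open SimpleGraph

/-- The edge-colored graph `(G, c)` contains a rainbow copy of `H`
passing through the edge `e`. -/
def IsRainbowCopyThrough {W V : Type*} (H : SimpleGraph W) (G : SimpleGraph V)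
    (c : Sym2 V → ℕ) (e : Sym2 V) : Prop :=
  ∃ f : W → V, Function.Injective f ∧
    (∀ ⦃a b⦄, H.Adj a b → G.Adj (f a) (f b)) ∧
    (∀ ⦃a b a' b'⦄, H.Adj a b → H.Adj a' b' →
      c s(f a, f b) = c s(f a', f b') → s(a, b) = s(a', b')) ∧
    ∃ a b, H.Adj a b ∧ e = s(f a, f b)

/-- The edge-colored graph `(G, c)` is weakly `H`-rainbow saturated: there is an
ordering `L` of the non-edges of `G` such that for every list `cs` of pairwise
distinct colors, adding the non-edges one at a time (the `i`-th one in color `cs i`)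
always creates a new rainbow copy of `H` through the added edge. -/
def WeaklyRainbowSat {W V : Type*} [DecidableEq V] (H : SimpleGraph W)
    (G : SimpleGraph V) (c : Sym2 V → ℕ) : Prop :=
  ∃ L : List (Sym2 V), L.Nodup ∧ (∀ e, e ∈ L ↔ e ∈ Gᶜ.edgeSet) ∧
    ∀ cs : List ℕ, cs.length = L.length → cs.Nodup →
      ∀ i : Fin L.length,
        IsRainbowCopyThrough H
          (G ⊔ SimpleGraph.fromEdgeSet {e | e ∈ L.take ((i : ℕ) + 1)})
          (((L.zip cs).take ((i : ℕ) + 1)).foldl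
            (fun c' p => Function.update c' p.1 p.2) c)
          (L.get i)

/-- The weak rainbow saturation number `rwsat(n, H)`: the minimum number of edges
in a weakly `H`-rainbow saturated edge-colored graph on `n` vertices, where by
convention the value is `n.choose 2` if no such graph exists. -/
noncomputable def rwsat {W : Type*} (H : SimpleGraph W) (n : ℕ) : ℕ :=
  sInf ({m | ∃ (G : SimpleGraph (Fin n)) (c : Sym2 (Fin n) → ℕ),
    WeaklyRainbowSat H G c ∧ G.edgeSet.ncard = m} ∪ {n.choose 2})

/-- `δ'(H)`: the minimum degree among vertices of nonzero degree. -/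
noncomputable def minPosDeg {W : Type*} (H : SimpleGraph W) : ℕ :=
  sInf {d | ∃ v, (H.neighborSet v).ncard = d ∧ d ≠ 0}

/-- `A` is contained in `B` as a subgraph (there is an injective graph
homomorphism from `A` to `B`). -/
def ContainsCopy {α β : Type*} (A : SimpleGraph α) (B : SimpleGraph β) : Prop :=
  ∃ f : α → β, Function.Injective f ∧ ∀ ⦃a b⦄, A.Adj a b → B.Adj (f a) (f b)

/-- The Turán number `ex(N, ℋ)` of the family `ℋ = {H - {u, v} : uv ∈ E(H)}`:
the maximum number of edges of an `N`-vertex graph containing no member of `ℋ`. -/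
noncomputable def exFam {W : Type*} (H : SimpleGraph W) (N : ℕ) : ℕ :=
  sSup {m | ∃ G : SimpleGraph (Fin N),
    (∀ u v : W, H.Adj u v → ¬ ContainsCopy (H.induce ({u, v}ᶜ : Set W)) G) ∧
    G.edgeSet.ncard = m}

/-- `f(H)`: the smallest `n` such that for each `N ∈ {n-1, n}` one has
`ex(N, ℋ) ≤ C(N,2) - 2N - 2`. -/
noncomputable def fH {W : Type*} (H : SimpleGraph W) : ℕ :=
  sInf {n | ∀ N ∈ ({n - 1, n} : Set ℕ),
    (exFam H N : ℤ) ≤ (N.choose 2 : ℤ) - 2 * N - 2}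

/-- The coloring `c` is rainbow (injective) on the set `S` of edges. -/
def RainbowOn {V : Type*} (c : Sym2 V → ℕ) (S : Set (Sym2 V)) : Prop :=
  ∀ e₁ ∈ S, ∀ e₂ ∈ S, c e₁ = c e₂ → e₁ = e₂

/-- The witness graph for the upper bound: on `Fin n`, with
`A = [0, δ'(H))`, `B = [δ'(H), δ'(H) + f(H))` and `C` the rest, take all edges
within `A ∪ B` together with all edges between `A` and `C`. -/
noncomputable def upperWitness {W : Type*} (H : SimpleGraph W) (n : ℕ) :
    SimpleGraph (Fin n) :=
  SimpleGraph.fromRel (fun i j =>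
    ((i : ℕ) < minPosDeg H + fH H ∧ (j : ℕ) < minPosDeg H + fH H) ∨
    ((i : ℕ) < minPosDeg H ∧ minPosDeg H + fH H ≤ (j : ℕ)))

lemma exFam_bdd {W : Type*} (H : SimpleGraph W) (N : ℕ) :
    BddAbove {m | ∃ G : SimpleGraph (Fin N),
    (∀ u v : W, H.Adj u v → ¬ ContainsCopy (H.induce ({u, v}ᶜ : Set W)) G) ∧
    G.edgeSet.ncard = m} := by
  classical
  refine ⟨(Set.univ : Set (Sym2 (Fin N))).ncard, ?_⟩
  rintro m ⟨G, -, rfl⟩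
  exact Set.ncard_le_ncard (Set.subset_univ _) (Set.toFinite _)

lemma exFam_large {W : Type*} [Fintype W] (H : SimpleGraph W) (hH : H.edgeSet.Nonempty)
    (N : ℕ) (hN : 5 * (Fintype.card W + 1) + 4 ≤ N) :
    (exFam H N : ℤ) ≤ (N.choose 2 : ℤ) - 2 * N - 2 := by
  classical
  obtain ⟨e, he⟩ := hH
  induction e with | _ u v =>
  rw [SimpleGraph.mem_edgeSet] at he
  have hc : (2 * N.choose 2 : ℤ) = N * (N - 1) := by
    have h1 := Nat.choose_two_right N
    have h2 := (Nat.even_mul_pred_self N).two_dvd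
    have h3 : 2 * N.choose 2 = N * (N - 1) := by rw [h1]; exact Nat.mul_div_cancel' h2
    have h4 : ((N - 1 : ℕ) : ℤ) = N - 1 := by push_cast [show 1 ≤ N by omega]; ring
    rw [← h4]; exact_mod_cast h3
  have hle : exFam H N ≤ N.choose 2 - 2 * N - 2 := by
    apply csSup_le'
    rintro m ⟨G, hG, rfl⟩
    set r := Fintype.card W + 1 with hr
    have hcf : G.CliqueFree (r + 1) := by
      by_contra hcon
      have φ := topEmbeddingOfNotCliqueFree hcon
      refine hG u v he ⟨fun x => φ (Fin.castLE (by omega) (Fintype.equivFin W x.1)), ?_, ?_⟩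
      · intro x y hxy
        have := φ.injective hxy
        simpa [Subtype.ext_iff] using this
      · intro x y hxy
        apply φ.map_adj_iff.2
        have : x.1 ≠ y.1 := by
          intro h; exact hxy.ne (Subtype.ext h)
        simpa using this
    have h1 := hcf.card_edgeFinset_le
    simp only [Fintype.card_fin] at h1
    rw [← card_edgeFinset_turanGraph] at h1
    have h2 := mul_card_edgeFinset_turanGraph_le (n := N) (r := r)
    have h3 : G.edgeSet.ncard = G.edgeFinset.card := by
      rw [← SimpleGraph.coe_edgeFinset, Set.ncard_coe_finset]
    rw [h3]
    have h4 : 2 * r * G.edgeFinset.card ≤ (r - 1) * N ^ 2 :=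
      (Nat.mul_le_mul_left _ h1).trans h2
    have h5 : (2 * r * G.edgeFinset.card : ℤ) ≤ (r - 1) * N ^ 2 := by
      have : ((r - 1 : ℕ) : ℤ) = r - 1 := by push_cast [show 1 ≤ r by omega]; ring
      rw [← this]; exact_mod_cast h4
    have hN' : (5 * r + 4 : ℤ) ≤ N := by exact_mod_cast hN
    have hr1 : (1 : ℤ) ≤ r := by omega
    have h6 : (G.edgeFinset.card : ℤ) + 2 * N + 2 ≤ N.choose 2 := by
      have : (2 * r : ℤ) * (G.edgeFinset.card + 2 * N + 2) ≤ (2 * r : ℤ) * N.choose 2 := by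
        have e1 : (2 * r : ℤ) * N.choose 2 = r * (N * (N - 1)) := by rw [← hc]; ring
        rw [e1]
        nlinarith
      exact le_of_mul_le_mul_left this (by omega)
    omega
  have : 2 * N + 2 ≤ N.choose 2 := by
    have hN' : (9 : ℤ) ≤ N := by omega
    have : (2 * (2 * N + 2) : ℤ) ≤ 2 * N.choose 2 := by rw [hc]; nlinarith
    omega
  omega

lemma fH_spec {W : Type*} [Fintype W] (H : SimpleGraph W) (hH : H.edgeSet.Nonempty) :
    (exFam H (fH H) : ℤ) ≤ ((fH H).choose 2 : ℤ) - 2 * (fH H) - 2 := by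
  have hne : {n | ∀ N ∈ ({n - 1, n} : Set ℕ),
    (exFam H N : ℤ) ≤ (N.choose 2 : ℤ) - 2 * N - 2}.Nonempty := by
    refine ⟨5 * (Fintype.card W + 1) + 5, ?_⟩
    rintro N (rfl | rfl)
    · exact exFam_large H hH _ (by omega)
    · exact exFam_large H hH _ (by omega)
  exact Nat.sInf_mem hne _ (by right; rfl)

lemma fH_copy {W : Type*} [Fintype W] (H : SimpleGraph W) (hH : H.edgeSet.Nonempty)
    (K : SimpleGraph (Fin (fH H)))
    (hK : Kᶜ.edgeSet.ncard ≤ 2 * fH H + 1) :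
    ∃ u v : W, H.Adj u v ∧ ContainsCopy (H.induce ({u, v}ᶜ : Set W)) K := by
  classical
  by_contra hcon
  push Not at hcon
  have h1 : K.edgeSet.ncard ≤ exFam H (fH H) := le_csSup (exFam_bdd H _) ⟨K, hcon, rfl⟩
  have h2 := fH_spec H hH
  have h3 : (fH H).choose 2 ≤ K.edgeSet.ncard + Kᶜ.edgeSet.ncard := by
    have e : (⊤ : SimpleGraph (Fin (fH H))).edgeSet = K.edgeSet ∪ Kᶜ.edgeSet := by
      rw [← SimpleGraph.edgeSet_sup, sup_compl_eq_top]
    have e2 : (⊤ : SimpleGraph (Fin (fH H))).edgeSet.ncard = (fH H).choose 2 := by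
      rw [← SimpleGraph.coe_edgeFinset, Set.ncard_coe_finset,
        card_edgeFinset_top_eq_card_choose_two, Fintype.card_fin]
    rw [← e2, e]
    exact Set.ncard_union_le _ _
  omega

lemma card_le_fH {W : Type*} [Fintype W] (H : SimpleGraph W) (hH : H.edgeSet.Nonempty) :
    Fintype.card W ≤ fH H + 2 := by
  classical
  obtain ⟨u, v, huv, g, hg, -⟩ := fH_copy H hH ⊤ (by simp)
  have h1 := Fintype.card_le_of_injective g hg
  rw [Fintype.card_fin] at h1
  have h2 : Fintype.card W ≤ Fintype.card (({u, v} : Set W)ᶜ : Set W) + 2 := by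
    have h3 := Fintype.card_compl_set ({u, v} : Set W)
    have h4 : Fintype.card ({u, v} : Set W) ≤ 2 := by
      rw [← Set.toFinset_card]
      simpa using Finset.card_le_two (a := u) (b := v)
    omega
  omega

lemma minPosDeg_spec {W : Type*} [Fintype W] (H : SimpleGraph W) (hH : H.edgeSet.Nonempty)
    (hpend : ∀ u v, H.Adj u v → (H.neighborSet v).ncard ≠ 1) :
    2 ≤ minPosDeg H ∧ ∃ w, (H.neighborSet w).ncard = minPosDeg H := by
  have hne : {d | ∃ v, (H.neighborSet v).ncard = d ∧ d ≠ 0}.Nonempty := by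
    obtain ⟨e, he⟩ := hH
    induction e with | _ u v =>
    rw [SimpleGraph.mem_edgeSet] at he
    refine ⟨_, u, rfl, ?_⟩
    exact Set.ncard_ne_zero_of_mem (show v ∈ H.neighborSet u from he)
  obtain ⟨w, hw, h0⟩ := Nat.sInf_mem hne
  change _ = minPosDeg H at hw
  change minPosDeg H ≠ 0 at h0
  refine ⟨?_, w, hw⟩
  have : (H.neighborSet w).Nonempty := by
    rw [Set.nonempty_iff_ne_empty]; intro h; rw [h] at hw; simp at hw; omega
  obtain ⟨z, hz⟩ := this
  have := hpend z w (SimpleGraph.Adj.symm hz)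
  omega

lemma upperWitness_adj {W : Type*} (H : SimpleGraph W) {n : ℕ} (i j : Fin n) :
    (upperWitness H n).Adj i j ↔ i ≠ j ∧
      (((i : ℕ) < minPosDeg H + fH H ∧ (j : ℕ) < minPosDeg H + fH H) ∨
        (i : ℕ) < minPosDeg H ∨ (j : ℕ) < minPosDeg H) := by
  simp only [upperWitness, SimpleGraph.fromRel_adj]
  constructor
  · rintro ⟨h, h'⟩; exact ⟨h, by omega⟩
  · rintro ⟨h, h'⟩; exact ⟨h, by omega⟩

lemma upperWitness_card {W : Type*} (H : SimpleGraph W) {n : ℕ}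
    (hn : fH H + minPosDeg H < n) :
    (upperWitness H n).edgeSet.ncard ≤ minPosDeg H * (n - fH H - minPosDeg H)
      + (fH H + minPosDeg H).choose 2 := by
  classical
  set d := minPosDeg H with hd
  set f := fH H with hf
  let φ : Fin d × Fin (n - f - d) → Sym2 (Fin n) := fun p =>
    s(⟨p.1, by omega⟩, ⟨d + f + p.2, by omega⟩)
  let ψ : Sym2 (Fin (f + d)) → Sym2 (Fin n) := Sym2.map (Fin.castLE hn.le)
  have hsub : (upperWitness H n).edgeSet ⊆
      φ '' Set.univ ∪ ψ '' (⊤ : SimpleGraph (Fin (f + d))).edgeSet := by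
    intro e
    induction e with | _ i j =>
    rw [SimpleGraph.mem_edgeSet, upperWitness_adj]
    rintro ⟨hne, h⟩
    have hne' : (i : ℕ) ≠ j := fun h => hne (Fin.ext h)
    by_cases hb : (i : ℕ) < f + d ∧ (j : ℕ) < f + d
    · right
      refine ⟨s(⟨i, hb.1⟩, ⟨j, hb.2⟩), ?_, rfl⟩
      simp [hne']
    · left
      by_cases hi : (i : ℕ) < d
      · refine ⟨(⟨i, hi⟩, ⟨j - (d + f), by omega⟩), trivial, ?_⟩
        have : d + f + ((j : ℕ) - (d + f)) = j := by omega
        simp [φ, this]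
      · refine ⟨(⟨j, by omega⟩, ⟨i - (d + f), by omega⟩), trivial, ?_⟩
        have : d + f + ((i : ℕ) - (d + f)) = i := by omega
        simp [φ, this]
  refine (Set.ncard_le_ncard hsub (Set.toFinite _)).trans ?_
  refine (Set.ncard_union_le _ _).trans ?_
  refine Nat.add_le_add ?_ ?_
  · refine (Set.ncard_image_le (Set.toFinite _)).trans ?_
    simp [Set.ncard_univ]
  · refine (Set.ncard_image_le (Set.toFinite _)).trans ?_
    rw [← SimpleGraph.coe_edgeFinset, Set.ncard_coe_finset,
        card_edgeFinset_top_eq_card_choose_two, Fintype.card_fin]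

/-- Criterion for a rainbow copy. -/
lemma rainbow_of {W V : Type*} (H : SimpleGraph W) (G : SimpleGraph V)
    (c : Sym2 V → ℕ) (e : Sym2 V) (F : W → V) (hF : Function.Injective F)
    (D : Set (Sym2 V)) (hD : RainbowOn c D) (hDG : D ⊆ G.edgeSet)
    (hmap : ∀ a b, H.Adj a b → s(F a, F b) ∈ D)
    (he : ∃ a b, H.Adj a b ∧ e = s(F a, F b)) : IsRainbowCopyThrough H G c e := by
  refine ⟨F, hF, fun a b h => hDG (hmap a b h), ?_, he⟩
  intro a b a' b' h h' hc
  have := hD _ (hmap a b h) _ (hmap a' b' h') hc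
  exact Sym2.map.injective hF (a₁ := s(a, b)) (a₂ := s(a', b')) this

/-- Adding an edge between `B` and `C`. -/
lemma case_BC {W : Type*} [Fintype W] (H : SimpleGraph W) (hH : H.edgeSet.Nonempty)
    (hpend : ∀ u v, H.Adj u v → (H.neighborSet v).ncard ≠ 1)
    {n : ℕ} (G : SimpleGraph (Fin n)) (hG : upperWitness H n ≤ G)
    (c : Sym2 (Fin n) → ℕ) (hc : RainbowOn c (upperWitness H n).edgeSet)
    (v b : Fin n) (hv : minPosDeg H + fH H ≤ v) (hb : minPosDeg H ≤ b)
    (hb' : (b : ℕ) < minPosDeg H + fH H) (hvb : G.Adj v b) :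
    IsRainbowCopyThrough H G c s(v, b) := by
  classical
  obtain ⟨hd2, w, hw⟩ := minPosDeg_spec H hH hpend
  have hcard := card_le_fH H hH
  set d := minPosDeg H with hd
  set f := fH H with hf
  -- the avoided vertex
  obtain ⟨x, hxlt, hxb, hx⟩ : ∃ x : Fin n, (x : ℕ) < d + f ∧ x ≠ b ∧
      ∀ e ∈ (upperWitness H n).edgeSet, x ∉ e → c e ≠ c s(v, b) := by
    by_cases hex : ∃ e ∈ (upperWitness H n).edgeSet, c e = c s(v, b)
    · obtain ⟨e, he, hce⟩ := hex
      have huniq : ∀ x ∈ e, ∀ e' ∈ (upperWitness H n).edgeSet, x ∉ e' → c e' ≠ c s(v, b) := by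
        intro x hx e' he' hxe' hc'
        have := hc e' he' e he (hc'.trans hce.symm)
        exact hxe' (this ▸ hx)
      induction e with | _ i j =>
      have he2 := he
      rw [SimpleGraph.mem_edgeSet, upperWitness_adj] at he2
      obtain ⟨hne, h⟩ := he2
      by_cases hi : (i : ℕ) < d + f ∧ i ≠ b
      · exact ⟨i, hi.1, hi.2, huniq i (by simp)⟩
      · refine ⟨j, ?_, ?_, huniq j (by simp)⟩
        · by_contra hj
          apply hi
          refine ⟨by omega, ?_⟩
          rintro rfl
          omega
        · rintro rfl
          apply hi
          exact ⟨by omega, hne⟩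
    · push Not at hex
      refine ⟨⟨0, by omega⟩, by simp; omega, ?_, fun e he _ => hex e he⟩
      intro h
      have := congrArg Fin.val h
      simp at this
      omega
  -- the sets
  have hvn := v.2
  let AB : Finset (Fin n) := Finset.univ.filter (fun i => (i : ℕ) < d + f)
  let A : Finset (Fin n) := Finset.univ.filter (fun i => (i : ℕ) < d)
  have hABc : AB.card = d + f := by
    have : AB = Finset.univ.map (Fin.castLEEmb (show d + f ≤ n by omega)) := by
      ext i
      simp only [AB, Finset.mem_filter, Finset.mem_univ, true_and, Finset.mem_map]
      constructor
      · intro h; exact ⟨⟨i, h⟩, rfl⟩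
      · rintro ⟨j, rfl⟩; exact j.2
    rw [this]; simp
  have hAc : A.card = d := by
    have : A = Finset.univ.map (Fin.castLEEmb (show d ≤ n by omega)) := by
      ext i
      simp only [A, Finset.mem_filter, Finset.mem_univ, true_and, Finset.mem_map]
      constructor
      · intro h; exact ⟨⟨i, h⟩, rfl⟩
      · rintro ⟨j, rfl⟩; exact j.2
    rw [this]; simp
  have hNc : (H.neighborFinset w).card = d := by
    rw [← hw, ← Set.ncard_coe_finset, SimpleGraph.coe_neighborFinset]
  obtain ⟨z, hz⟩ : (H.neighborFinset w).Nonempty := by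
    rw [← Finset.card_pos]; omega
  have hwz : H.Adj w z := by simpa using hz
  let N' := (H.neighborFinset w).erase z
  have hN'c : N'.card = d - 1 := by rw [Finset.card_erase_of_mem hz, hNc]
  obtain ⟨A', hA'sub, hA'c⟩ : ∃ A' ⊆ A.erase x, A'.card = d - 1 := by
    apply Finset.exists_subset_card_eq
    have := Finset.pred_card_le_card_erase (s := A) (a := x)
    omega
  let eqv : N' ≃ A' := Finset.equivOfCardEq (hN'c.trans hA'c.symm)
  let F0 : W → Fin n := fun y => if y = w then v else if h : y ∈ N' then eqv ⟨y, h⟩ else b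
  have hF0w : F0 w = v := by simp [F0]
  have hwN' : w ∉ N' := by simp [N']
  have hF0z : F0 z = b := by
    have : z ≠ w := hwz.ne'
    simp [F0, this, N']
  have hF0N : ∀ y ∈ N', F0 y ∈ A' := by
    intro y hy
    have : y ≠ w := by rintro rfl; exact hwN' hy
    simp only [F0, this, if_false, hy, dif_pos]
    exact (eqv ⟨y, hy⟩).2
  have hA'val : ∀ y ∈ A', (y : ℕ) < d ∧ y ≠ x := by
    intro y hy
    have := hA'sub hy
    simp [A] at this
    exact ⟨this.2, this.1⟩
  -- target set
  have hsubt : insert v (insert b A') ⊆ insert v (AB.erase x) := by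
    intro y hy
    simp only [Finset.mem_insert, Finset.mem_erase, AB, Finset.mem_filter, Finset.mem_univ,
      true_and] at hy ⊢
    rcases hy with rfl | rfl | hy
    · left; rfl
    · right; exact ⟨hxb.symm, hb'⟩
    · right; have := hA'val y hy; exact ⟨this.2, by omega⟩
  have hc1 : (insert v (insert b A')).card ≤ Fintype.card W := by
    have h1 := Finset.card_insert_le v (insert b A')
    have h2 := Finset.card_insert_le b A'
    have h3 : (insert w (H.neighborFinset w)).card ≤ Fintype.card W := Finset.card_le_univ _
    rw [Finset.card_insert_of_notMem (by simp)] at h3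
    omega
  have hc2 : Fintype.card W ≤ (insert v (AB.erase x)).card := by
    rw [Finset.card_insert_of_notMem (by simp [AB]; omega),
      Finset.card_erase_of_mem (by simp [AB, hxlt]), hABc]
    omega
  obtain ⟨t, ht1, ht2, htc⟩ := Finset.exists_subsuperset_card_eq hsubt hc1 hc2
  have himg : Finset.image F0 (insert w (insert z N')) ⊆ t := by
    intro y hy
    apply ht1
    simp only [Finset.mem_image, Finset.mem_insert] at hy
    obtain ⟨a, ha, rfl⟩ := hy
    simp only [Finset.mem_insert]
    rcases ha with rfl | rfl | ha
    · left; exact hF0w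
    · right; left; exact hF0z
    · right; right; exact hF0N a ha
  have hbA' : b ∉ A' := by
    intro h; have := (hA'val b h).1; omega
  have hvA' : v ∉ A' := by
    intro h; have := (hA'val v h).1; omega
  have hvb' : v ≠ b := hvb.ne
  have hinj : Set.InjOn F0 (insert w (insert z N') : Finset W) := by
    intro y hy y' hy' hyy
    simp only [Finset.coe_insert, Set.mem_insert_iff, Finset.mem_coe] at hy hy'
    rcases hy with rfl | rfl | hy <;> rcases hy' with rfl | rfl | hy'
    · rfl
    · rw [hF0w, hF0z] at hyy; exact absurd hyy hvb'
    · rw [hF0w] at hyy; exact absurd (hyy ▸ hF0N _ hy') hvA'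
    · rw [hF0w, hF0z] at hyy; exact absurd hyy.symm hvb'
    · rfl
    · rw [hF0z] at hyy; exact absurd (hyy ▸ hF0N _ hy') hbA'
    · rw [hF0w] at hyy; exact absurd (hyy ▸ hF0N _ hy) hvA'
    · rw [hF0z] at hyy; exact absurd (hyy ▸ hF0N _ hy) hbA'
    · have h1 : y ≠ w := by rintro rfl; exact hwN' hy
      have h2 : y' ≠ w := by rintro rfl; exact hwN' hy'
      simp only [F0, h1, h2, if_false, hy, hy', dif_pos] at hyy
      have := eqv.injective (Subtype.ext hyy)
      exact congrArg Subtype.val this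
  obtain ⟨g, hg⟩ := Finset.exists_equiv_extend_of_card_eq htc.symm himg hinj
  let F : W → Fin n := fun y => (g y : Fin n)
  have hFinj : Function.Injective F := fun y y' h => g.injective (Subtype.ext h)
  have hFw : F w = v := (hg w (by simp)).trans hF0w
  have hFz : F z = b := (hg z (by simp)).trans hF0z
  have hFN : ∀ y ∈ N', F y ∈ A' := by
    intro y hy
    have : F y = F0 y := hg y (by simp [hy])
    rw [this]; exact hF0N y hy
  have hFo : ∀ y, y ≠ w → (F y : ℕ) < d + f ∧ F y ≠ x := by
    intro y hy
    have h1 := ht2 (g y).2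
    have h2 : F y ≠ v := by rw [← hFw]; exact hFinj.ne hy
    simp only [Finset.mem_insert, Finset.mem_erase, AB, Finset.mem_filter, Finset.mem_univ,
      true_and] at h1
    rcases h1 with h1 | h1
    · exact absurd h1 h2
    · exact ⟨h1.2, h1.1⟩
  have hxv : x ≠ v := by rintro rfl; omega
  have hstar : ∀ y, H.Adj w y → s(F w, F y) = s(v, b) ∨
      (s(F w, F y) ∈ (upperWitness H n).edgeSet ∧ x ∉ s(F w, F y)) := by
    intro y hy
    by_cases hyz : y = z
    · left; rw [hyz, hFw, hFz]
    · right
      have hyN : y ∈ N' := by simp [N', hyz, hy]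
      have h1 := hA'val _ (hFN y hyN)
      refine ⟨?_, ?_⟩
      · rw [SimpleGraph.mem_edgeSet, upperWitness_adj]
        exact ⟨hFinj.ne hy.ne, Or.inr (Or.inr h1.1)⟩
      · rw [hFw, Sym2.mem_iff]
        rintro (h | h)
        · exact hxv h
        · exact h1.2 h.symm
  refine rainbow_of H G c _ F hFinj
    (insert s(v, b) {e | e ∈ (upperWitness H n).edgeSet ∧ x ∉ e}) ?_ ?_ ?_ ?_
  · rintro e₁ (rfl | ⟨h1, h1'⟩) e₂ (rfl | ⟨h2, h2'⟩) h
    · rfl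
    · exact absurd h.symm (hx _ h2 h2')
    · exact absurd h (hx _ h1 h1')
    · exact hc _ h1 _ h2 h
  · rintro e (rfl | ⟨h1, h1'⟩)
    · exact hvb
    · exact SimpleGraph.edgeSet_mono hG h1
  · intro p q hpq
    by_cases hp : p = w
    · subst hp; exact hstar q hpq
    · by_cases hq : q = w
      · subst hq; rw [Sym2.eq_swap (a := F p)]; exact hstar p hpq.symm
      · right
        have h1 := hFo p hp
        have h2 := hFo q hq
        refine ⟨?_, ?_⟩
        · rw [SimpleGraph.mem_edgeSet, upperWitness_adj]
          exact ⟨hFinj.ne hpq.ne, Or.inl ⟨h1.1, h2.1⟩⟩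
        · rw [Sym2.mem_iff]
          rintro (h | h)
          · exact h1.2 h.symm
          · exact h2.2 h.symm
  · exact ⟨w, z, hwz, by rw [hFw, hFz]⟩

/-- Adding an edge inside `C`. -/
lemma case_CC {W : Type*} [Fintype W] (H : SimpleGraph W) (hH : H.edgeSet.Nonempty)
    {n : ℕ} (G : SimpleGraph (Fin n)) (hG : upperWitness H n ≤ G)
    (c : Sym2 (Fin n) → ℕ) (hc : RainbowOn c (upperWitness H n).edgeSet)
    (T : Set (Sym2 (Fin n))) (hTG : T ⊆ G.edgeSet) (hT : RainbowOn c T)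
    (u v : Fin n) (hu : minPosDeg H + fH H ≤ u) (hv : minPosDeg H + fH H ≤ v)
    (huv : s(u, v) ∈ T)
    (hBC : ∀ x b : Fin n, minPosDeg H + fH H ≤ x → minPosDeg H ≤ b →
      (b : ℕ) < minPosDeg H + fH H → s(x, b) ∈ T) :
    IsRainbowCopyThrough H G c s(u, v) := by
  classical
  have hne : u ≠ v := (hTG huv : G.Adj u v).ne
  have hun := u.2
  have hvn := v.2
  let β : Fin (fH H) → Fin n := fun i => ⟨minPosDeg H + i, by omega⟩
  have hβ : Function.Injective β := by
    intro i j h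
    have := congrArg Fin.val h
    simp only [β] at this
    exact Fin.ext (by omega)
  have hβ1 : ∀ i, minPosDeg H ≤ (β i : ℕ) ∧ (β i : ℕ) < minPosDeg H + fH H := by
    intro i; have := i.2; simp only [β]; omega
  let P : Set (Sym2 (Fin n)) :=
    insert s(u, v) (Set.range (fun i => s(u, β i)) ∪ Set.range (fun i => s(v, β i)))
  have hPT : P ⊆ T := by
    rintro e (rfl | ⟨i, rfl⟩ | ⟨i, rfl⟩)
    · exact huv
    · exact hBC _ _ hu (hβ1 i).1 (hβ1 i).2
    · exact hBC _ _ hv (hβ1 i).1 (hβ1 i).2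
  have hPc : P.ncard ≤ 2 * fH H + 1 := by
    refine (Set.ncard_insert_le _ _).trans ?_
    have h1 := Set.ncard_union_le (Set.range (fun i => s(u, β i))) (Set.range (fun i => s(v, β i)))
    have h2 : ∀ x, (Set.range (fun i => s(x, β i))).ncard ≤ fH H := by
      intro x
      rw [← Set.image_univ]
      refine (Set.ncard_image_le (Set.toFinite _)).trans ?_
      simp [Set.ncard_univ]
    have := h2 u
    have := h2 v
    omega
  let K : SimpleGraph (Fin (fH H)) :=
    { Adj := fun i j => i ≠ j ∧ c s(β i, β j) ∉ c '' P
      symm := ⟨fun i j h => ⟨h.1.symm, by rw [Sym2.eq_swap]; exact h.2⟩⟩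
      loopless := ⟨fun i h => h.1 rfl⟩ }
  have hβG : ∀ i j, i ≠ j → s(β i, β j) ∈ (upperWitness H n).edgeSet := by
    intro i j hij
    rw [SimpleGraph.mem_edgeSet, upperWitness_adj]
    exact ⟨hβ.ne hij, Or.inl ⟨(hβ1 i).2, (hβ1 j).2⟩⟩
  have hK : Kᶜ.edgeSet.ncard ≤ 2 * fH H + 1 := by
    refine le_trans ?_ hPc
    refine le_trans ?_ (Set.ncard_image_le (f := c) (Set.toFinite P))
    refine Set.ncard_le_ncard_of_injOn (fun e => c (e.map β)) ?_ ?_ (Set.toFinite _)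
    · intro e
      induction e with | _ i j =>
      rw [SimpleGraph.mem_edgeSet, SimpleGraph.compl_adj]
      rintro ⟨hij, h⟩
      by_contra hcon
      exact h ⟨hij, hcon⟩
    · intro e
      induction e with | _ i j =>
      intro he e'
      induction e' with | _ i' j' =>
      intro he' heq
      rw [SimpleGraph.mem_edgeSet, SimpleGraph.compl_adj] at he he'
      exact Sym2.map.injective hβ (hc _ (hβG _ _ he.1) _ (hβG _ _ he'.1) heq)
  obtain ⟨x, y, hxy, g, hginj, hg⟩ := fH_copy H hH K hK
  let F : W → Fin n := fun a => if h : a ∈ ({x, y}ᶜ : Set W) then β (g ⟨a, h⟩) else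
    if a = x then u else v
  have hFx : F x = u := by simp [F]
  have hFy : F y = v := by simp [F, hxy.ne']
  have hFo : ∀ a (h : a ∈ ({x, y}ᶜ : Set W)), F a = β (g ⟨a, h⟩) := by
    intro a h; simp only [F, dif_pos h]
  have hcases : ∀ a : W, a = x ∨ a = y ∨ a ∈ ({x, y}ᶜ : Set W) := by
    intro a; simp only [Set.mem_compl_iff, Set.mem_insert_iff, Set.mem_singleton_iff]; tauto
  have hβu : ∀ i, β i ≠ u := by
    intro i h; have := (hβ1 i).2; rw [h] at this; omega
  have hβv : ∀ i, β i ≠ v := by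
    intro i h; have := (hβ1 i).2; rw [h] at this; omega
  have hFinj : Function.Injective F := by
    intro a a' haa
    rcases hcases a with rfl | rfl | ha <;> rcases hcases a' with rfl | rfl | ha'
    · rfl
    · rw [hFx, hFy] at haa; exact absurd haa hne
    · rw [hFx, hFo _ ha'] at haa; exact absurd haa.symm (hβu _)
    · rw [hFx, hFy] at haa; exact absurd haa.symm hne
    · rfl
    · rw [hFy, hFo _ ha'] at haa; exact absurd haa.symm (hβv _)
    · rw [hFx, hFo _ ha] at haa; exact absurd haa (hβu _)
    · rw [hFy, hFo _ ha] at haa; exact absurd haa (hβv _)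
    · rw [hFo _ ha, hFo _ ha'] at haa
      exact congrArg Subtype.val (hginj (hβ haa))
  refine rainbow_of H G c _ F hFinj
    (P ∪ {e | e ∈ (upperWitness H n).edgeSet ∧ c e ∉ c '' P}) ?_ ?_ ?_ ?_
  · rintro e₁ (h1 | ⟨h1, h1'⟩) e₂ (h2 | ⟨h2, h2'⟩) h
    · exact hT _ (hPT h1) _ (hPT h2) h
    · exact absurd ⟨e₁, h1, h⟩ h2'
    · exact absurd ⟨e₂, h2, h.symm⟩ h1'
    · exact hc _ h1 _ h2 h
  · rintro e (h1 | ⟨h1, h1'⟩)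
    · exact hTG (hPT h1)
    · exact SimpleGraph.edgeSet_mono hG h1
  · intro p q hpq
    rcases hcases p with rfl | rfl | hp <;> rcases hcases q with rfl | rfl | hq
    · exact absurd rfl hpq.ne
    · left; rw [hFx, hFy]; exact Or.inl rfl
    · left; rw [hFx, hFo _ hq]; exact Or.inr (Or.inl ⟨_, rfl⟩)
    · left; rw [hFx, hFy, Sym2.eq_swap]; exact Or.inl rfl
    · exact absurd rfl hpq.ne
    · left; rw [hFy, hFo _ hq]; exact Or.inr (Or.inr ⟨_, rfl⟩)
    · left; rw [hFx, hFo _ hp, Sym2.eq_swap]; exact Or.inr (Or.inl ⟨_, rfl⟩)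
    · left; rw [hFy, hFo _ hp, Sym2.eq_swap]; exact Or.inr (Or.inr ⟨_, rfl⟩)
    · right
      have hK' : K.Adj (g ⟨p, hp⟩) (g ⟨q, hq⟩) := hg (by simpa using hpq)
      rw [hFo _ hp, hFo _ hq]
      exact ⟨hβG _ _ hK'.1, hK'.2⟩
  · exact ⟨x, y, hxy, by rw [hFx, hFy]⟩

lemma foldl_update_notMem {V : Type*} [DecidableEq V] (l : List (V × ℕ)) (c : V → ℕ) (e : V)
    (he : e ∉ l.map Prod.fst) :
    l.foldl (fun c' p => Function.update c' p.1 p.2) c e = c e := by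
  induction l generalizing c with
  | nil => rfl
  | cons p l ih =>
    simp only [List.map_cons, List.mem_cons, not_or] at he
    rw [List.foldl_cons, ih _ he.2, Function.update_of_ne he.1]

lemma foldl_update_mem {V : Type*} [DecidableEq V] (l : List (V × ℕ)) (c : V → ℕ)
    (hl : (l.map Prod.fst).Nodup) (p : V × ℕ) (hp : p ∈ l) :
    l.foldl (fun c' p => Function.update c' p.1 p.2) c p.1 = p.2 := by
  induction l generalizing c with
  | nil => simp at hp
  | cons q l ih =>
    simp only [List.map_cons, List.nodup_cons] at hl
    rw [List.foldl_cons]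
    rcases List.mem_cons.1 hp with rfl | hp
    · rw [foldl_update_notMem _ _ _ hl.1, Function.update_self]
    · exact ih _ hl.2 hp

lemma map_fst_zip_take {V : Type*} (L : List V) (cs : List ℕ) (h : cs.length = L.length) (k : ℕ) :
    ((L.zip cs).take k).map Prod.fst = L.take k := by
  rw [List.map_take, List.map_fst_zip (by omega)]

lemma foldl_rainbow {V : Type*} [DecidableEq (Sym2 V)] (L : List (Sym2 V)) (cs : List ℕ)
    (h : cs.length = L.length) (hL : L.Nodup) (hcs : cs.Nodup) (k : ℕ) (c : Sym2 V → ℕ) :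
    RainbowOn (((L.zip cs).take k).foldl (fun c' p => Function.update c' p.1 p.2) c)
      {e | e ∈ L.take k} := by
  have hnd : (((L.zip cs).take k).map Prod.fst).Nodup := by
    rw [map_fst_zip_take L cs h]; exact hL.sublist (List.take_sublist _ _)
  have hnd2 : (((L.zip cs).take k).map Prod.snd).Nodup := by
    rw [List.map_take, List.map_snd_zip (by omega)]; exact hcs.sublist (List.take_sublist _ _)
  intro e₁ h1 e₂ h2 heq
  rw [Set.mem_ofPred_eq, ← map_fst_zip_take L cs h, List.mem_map] at h1 h2
  obtain ⟨p, hp, rfl⟩ := h1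
  obtain ⟨q, hq, rfl⟩ := h2
  rw [foldl_update_mem _ _ hnd p hp, foldl_update_mem _ _ hnd q hq] at heq
  rw [List.inj_on_of_nodup_map hnd2 hp hq heq]

lemma witness_sat {W : Type*} [Fintype W] (H : SimpleGraph W)
    (hH : H.edgeSet.Nonempty)
    (hpend : ∀ u v, H.Adj u v → (H.neighborSet v).ncard ≠ 1)
    (n : ℕ)
    (c : Sym2 (Fin n) → ℕ) (hc : RainbowOn c (upperWitness H n).edgeSet) :
    WeaklyRainbowSat H (upperWitness H n) c := by
  classical
  let isCC : Sym2 (Fin n) → Prop := fun e => ∀ x ∈ e, minPosDeg H + fH H ≤ (x : ℕ)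
  let S1 : Finset (Sym2 (Fin n)) := (upperWitness H n)ᶜ.edgeFinset.filter (fun e => ¬ isCC e)
  let S2 : Finset (Sym2 (Fin n)) := (upperWitness H n)ᶜ.edgeFinset.filter (fun e => isCC e)
  have hmem : ∀ e, e ∈ S1.toList ++ S2.toList ↔ e ∈ (upperWitness H n)ᶜ.edgeSet := by
    intro e
    simp only [List.mem_append, Finset.mem_toList, S1, S2, Finset.mem_filter,
      SimpleGraph.mem_edgeFinset]
    tauto
  have hnd : (S1.toList ++ S2.toList).Nodup := by
    refine List.Nodup.append S1.nodup_toList S2.nodup_toList ?_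
    intro e h1 h2
    simp only [Finset.mem_toList, S1, S2, Finset.mem_filter] at h1 h2
    exact h1.2 h2.2
  refine ⟨S1.toList ++ S2.toList, hnd, hmem, ?_⟩
  set L := S1.toList ++ S2.toList with hL
  intro cs hlen hcs i
  set T : Set (Sym2 (Fin n)) := {e | e ∈ L.take ((i : ℕ) + 1)} with hTdef
  set G := upperWitness H n ⊔ SimpleGraph.fromEdgeSet T with hGdef
  have hTrb := foldl_rainbow L cs hlen hnd hcs ((i : ℕ) + 1) c
  have hoff : ∀ e, e ∉ T → (((L.zip cs).take ((i : ℕ) + 1)).foldl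
            (fun c' p => Function.update c' p.1 p.2) c) e = c e := by
    intro e he
    apply foldl_update_notMem
    rw [map_fst_zip_take L cs hlen]; exact he
  set c' := ((L.zip cs).take ((i : ℕ) + 1)).foldl
            (fun c' p => Function.update c' p.1 p.2) c with hc'
  have hTc : ∀ e ∈ T, e ∈ (upperWitness H n)ᶜ.edgeSet := by
    intro e he
    exact (hmem e).1 (List.mem_of_mem_take he)
  have hdisj : ∀ e ∈ (upperWitness H n).edgeSet, e ∉ T := by
    intro e he heT
    have := hTc e heT
    induction e with | _ a b =>
    rw [SimpleGraph.mem_edgeSet] at he this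
    exact this.2 he
  have hc2 : RainbowOn c' (upperWitness H n).edgeSet := by
    intro e₁ h1 e₂ h2 h
    rw [hoff _ (hdisj _ h1), hoff _ (hdisj _ h2)] at h
    exact hc _ h1 _ h2 h
  have hTG : T ⊆ G.edgeSet := by
    intro e he
    have := hTc e he
    rw [hGdef, SimpleGraph.edgeSet_sup, SimpleGraph.edgeSet_fromEdgeSet]
    exact Or.inr ⟨he, SimpleGraph.not_isDiag_of_mem_edgeSet _ this⟩
  have hle : upperWitness H n ≤ G := le_sup_left
  have hiT : L.get i ∈ T := by
    rw [hTdef, Set.mem_ofPred_eq, List.mem_take_iff_getElem]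
    exact ⟨i, by have := i.2; omega, rfl⟩
  have hbc : ∀ e ∈ S1, ∃ x b : Fin n, e = s(x, b) ∧ minPosDeg H + fH H ≤ (x : ℕ) ∧
      minPosDeg H ≤ (b : ℕ) ∧ (b : ℕ) < minPosDeg H + fH H := by
    intro e he
    simp only [S1, Finset.mem_filter, SimpleGraph.mem_edgeFinset] at he
    obtain ⟨h1, h2⟩ := he
    induction e with | _ a b =>
    rw [SimpleGraph.mem_edgeSet, SimpleGraph.compl_adj, upperWitness_adj] at h1
    obtain ⟨hab, h1⟩ := h1
    simp only [isCC, Sym2.mem_iff, forall_eq_or_imp, forall_eq] at h2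
    by_cases ha : minPosDeg H + fH H ≤ (a : ℕ)
    · refine ⟨a, b, rfl, ha, ?_, ?_⟩
      · by_contra hcon; exact h1 ⟨hab, by omega⟩
      · by_contra hcon; exact h2 ⟨ha, by omega⟩
    · refine ⟨b, a, Sym2.eq_swap, ?_, ?_, by omega⟩
      · by_contra hcon; exact h1 ⟨hab, by omega⟩
      · by_contra hcon; exact h1 ⟨hab, by omega⟩
  by_cases hi : (i : ℕ) < S1.toList.length
  · have hS1 : L.get i ∈ S1 := by
      rw [← Finset.mem_toList]
      have : L.get i = S1.toList[(i : ℕ)] := by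
        simp only [List.get_eq_getElem]
        exact List.getElem_append_left hi
      rw [this]; exact List.getElem_mem hi
    obtain ⟨x, b, he, hx, hb, hb'⟩ := hbc _ hS1
    rw [he] at hiT ⊢
    exact case_BC H hH hpend G hle c' hc2 x b hx hb hb' (hTG hiT)
  · have hS2 : L.get i ∈ S2 := by
      rw [← Finset.mem_toList]
      have : L.get i ∈ L.drop S1.toList.length := by
        rw [List.mem_drop_iff_getElem]
        refine ⟨(i : ℕ) - S1.toList.length, by have := i.2; omega, ?_⟩
        simp only [List.get_eq_getElem]
        congr 1; omega
      have hd : L.drop S1.toList.length = S2.toList := by rw [hL, List.drop_left]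
      rwa [hd] at this
    have hS1T : ∀ e ∈ S1, e ∈ T := by
      intro e he
      rw [hTdef, Set.mem_ofPred_eq]
      have htk : ∀ k, L.take k = S1.toList.take k ++ S2.toList.take (k - S1.toList.length) := by
        intro k; rw [hL, List.take_append]
      rw [htk]
      apply List.mem_append_left
      rw [List.take_of_length_le (by omega)]
      exact Finset.mem_toList.2 he
    have h3 := hS2
    simp only [S2, Finset.mem_filter] at h3
    obtain ⟨-, h3⟩ := h3
    generalize L.get i = e at *
    induction e with | _ u v =>
    refine case_CC H hH G hle c' hc2 T hTG hTrb u v (h3 u (by simp)) (h3 v (by simp)) hiT ?_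
    intro x b hx hb hb'
    apply hS1T
    simp only [S1, Finset.mem_filter, SimpleGraph.mem_edgeFinset]
    refine ⟨?_, ?_⟩
    · rw [SimpleGraph.mem_edgeSet, SimpleGraph.compl_adj, upperWitness_adj]
      refine ⟨?_, ?_⟩
      · rintro rfl; omega
      · rintro ⟨-, h⟩; omega
    · intro h
      have := h b (by simp)
      omega

/-- If the non-empty graph `H` has no pendant edges and `n > f(H) + δ'(H)`, then
`rwsat(n, H) ≤ δ'(H)·(n - f(H) - δ'(H)) + C(f(H) + δ'(H), 2)`; moreover, the bound
is witnessed by the graph `upperWitness H n` (all pairs inside `A ∪ B` plus all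
pairs between `A` and `C`, where `|A| = δ'(H)`, `|B| = f(H)`,
`|C| = n - f(H) - δ'(H)`) equipped with any rainbow coloring, which is weakly
`H`-rainbow saturated. -/
theorem rwsat_upper_bound {W : Type*} [Fintype W] (H : SimpleGraph W)
    (hH : H.edgeSet.Nonempty)
    (hpend : ∀ u v, H.Adj u v → (H.neighborSet v).ncard ≠ 1)
    (n : ℕ) (hn : fH H + minPosDeg H < n) :
    rwsat H n ≤ minPosDeg H * (n - fH H - minPosDeg H)
      + (fH H + minPosDeg H).choose 2 ∧
    ∀ c : Sym2 (Fin n) → ℕ, RainbowOn c (upperWitness H n).edgeSet →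
      WeaklyRainbowSat H (upperWitness H n) c := by
  refine ⟨?_, fun c hc => witness_sat H hH hpend n c hc⟩
  refine le_trans (Nat.sInf_le ?_) (upperWitness_card H hn)
  obtain ⟨c, hc⟩ := exists_injective_nat (Sym2 (Fin n))
  exact Or.inl ⟨upperWitness H n, c,
    witness_sat H hH hpend n c (fun _ _ _ _ h => hc h), rfl⟩
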